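/- arXiv:1511.07156 — 2 statements merged into one kernel-verified Lean document; each statement's English description precedes it below -/
import Mathlib

section
/- Let 0<q<1, let 0<a<b, and let α,β ≥ 0 satisfy αa = βb. Then for all real numbers x > x₁ > 0 one has exp[αa(x−x₁)(ψ_q(ax₁)−ψ_q(bx₁))] ≤ (Γ_q(bx₁))^β/(Γ_q(ax₁))^α · (Γ_q(ax))^α/(Γ_q(bx))^β ≤ 1. -/
/-- The q-gamma function for `0 < q < 1`:
`Γ_q(x) = (1-q)^{1-x} ∏_{j=0}^∞ (1-q^{j+1})/(1-q^{j+x})`. -/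
noncomputable def qGamma (q x : ℝ) : ℝ :=
  (1 - q) ^ (1 - x) * ∏' j : ℕ, (1 - q ^ (j + 1)) / (1 - q ^ ((j : ℝ) + x))

/-- The q-digamma function for `0 < q < 1`:
`ψ_q(x) = -ln(1-q) + ln q * ∑_{k=1}^∞ q^{kx}/(1-q^k)`. -/
noncomputable def qDigamma (q x : ℝ) : ℝ :=
  -Real.log (1 - q) + Real.log q * ∑' k : ℕ, q ^ (((k : ℝ) + 1) * x) / (1 - q ^ (k + 1))

noncomputable def wq (c : ℝ) (k : ℕ) : ℝ := 1 / (1 - Real.exp (-(c * (k + 1))))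
noncomputable def eeq (c t : ℝ) (k : ℕ) : ℝ := Real.exp (-(c * (k + 1) * t))
noncomputable def Aq (c t : ℝ) : ℝ := ∑' k : ℕ, wq c k / (k + 1) * eeq c t k
noncomputable def Bq (c t : ℝ) : ℝ := ∑' k : ℕ, wq c k * eeq c t k
noncomputable def Cq (c t : ℝ) : ℝ := ∑' k : ℕ, (k + 1) * wq c k * eeq c t k

lemma wq_den_pos {c : ℝ} (hc : 0 < c) (k : ℕ) : 0 < 1 - Real.exp (-(c * (k + 1))) := by
  have : Real.exp (-(c * (k + 1))) < 1 := by
    rw [Real.exp_lt_one_iff]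
    have : 0 < c * ((k : ℝ) + 1) := by positivity
    linarith
  linarith

lemma wq_pos {c : ℝ} (hc : 0 < c) (k : ℕ) : 0 < wq c k := by
  have := wq_den_pos hc k
  unfold wq; positivity

lemma wq_le {c : ℝ} (hc : 0 < c) (k : ℕ) : wq c k ≤ wq c 0 := by
  unfold wq
  apply one_div_le_one_div_of_le (wq_den_pos hc 0)
  have : Real.exp (-(c * (k + 1))) ≤ Real.exp (-(c * ((0:ℕ) + 1))) := by
    apply Real.exp_le_exp.mpr
    have : (0:ℝ) ≤ c * k := by positivity
    push_cast; nlinarith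
  linarith

lemma eq_pow (c t : ℝ) (k : ℕ) : eeq c t k = Real.exp (-(c * t)) ^ (k + 1) := by
  unfold eeq
  rw [← Real.exp_nat_mul]; congr 1; push_cast; ring

lemma eq_pos (c t : ℝ) (k : ℕ) : 0 < eeq c t k := Real.exp_pos _

lemma exp_lt {c t : ℝ} (hc : 0 < c) (ht : 0 < t) : Real.exp (-(c * t)) < 1 := by
  rw [Real.exp_lt_one_iff]
  have := mul_pos hc ht
  linarith

lemma sumC {c t : ℝ} (hc : 0 < c) (ht : 0 < t) :
    Summable (fun k : ℕ => ((k : ℝ) + 1) * wq c k * eeq c t k) := by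
  have h1 : Summable (fun k : ℕ => (k : ℝ) ^ 1 * Real.exp (-(c * t)) ^ k) := by
    apply summable_pow_mul_geometric_of_norm_lt_one
    rw [Real.norm_of_nonneg (Real.exp_pos _).le]; exact exp_lt hc ht
  have h2 := ((summable_nat_add_iff 1).mpr h1).mul_left (wq c 0)
  refine Summable.of_nonneg_of_le (fun k => ?_) (fun k => ?_) h2
  · have := wq_pos hc k
    have := eq_pos c t k
    positivity
  · rw [eq_pow]
    have := wq_le hc k
    have h3 : 0 < Real.exp (-(c * t)) ^ (k + 1) := by positivity
    push_cast
    calc ((k:ℝ) + 1) * wq c k * Real.exp (-(c * t)) ^ (k + 1)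
        ≤ ((k:ℝ) + 1) * wq c 0 * Real.exp (-(c * t)) ^ (k + 1) := by gcongr
      _ = _ := by ring

lemma sumB {c t : ℝ} (hc : 0 < c) (ht : 0 < t) :
    Summable (fun k : ℕ => wq c k * eeq c t k) := by
  refine Summable.of_nonneg_of_le (fun k => ?_) (fun k => ?_) (sumC hc ht)
  · exact (mul_pos (wq_pos hc k) (eq_pos c t k)).le
  · have := (mul_pos (wq_pos hc k) (eq_pos c t k)).le
    have h2 : (0:ℝ) ≤ k := by positivity
    nlinarith

lemma sumA {c t : ℝ} (hc : 0 < c) (ht : 0 < t) :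
    Summable (fun k : ℕ => wq c k / (k + 1) * eeq c t k) := by
  refine Summable.of_nonneg_of_le (fun k => ?_) (fun k => ?_) (sumB hc ht)
  · have := wq_pos hc k
    have := eq_pos c t k
    positivity
  · have h1 := wq_pos hc k
    have h2 := eq_pos c t k
    gcongr
    apply div_le_self h1.le
    have h2 : (0:ℝ) ≤ k := by positivity
    linarith

lemma eq_deriv (c t : ℝ) (k : ℕ) :
    HasDerivAt (fun t => eeq c t k) (-(c * (k + 1)) * eeq c t k) t := by
  unfold eeq
  have := (hasDerivAt_const_mul (x := t) (-(c * ((k:ℝ) + 1)))).exp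
  have e : (fun t : ℝ => Real.exp (-(c * (k + 1) * t))) =
      fun t : ℝ => Real.exp (-(c * ((k:ℝ) + 1)) * t) := by
    ext t; rw [neg_mul]
  rw [e]
  refine this.congr_deriv ?_
  rw [neg_mul, neg_mul]; ring

lemma eq_anti {c s t : ℝ} (hc : 0 < c) (h : s ≤ t) (k : ℕ) : eeq c t k ≤ eeq c s k := by
  unfold eeq
  apply Real.exp_le_exp.mpr
  have : c * (k + 1) * s ≤ c * (k + 1) * t := by gcongr
  linarith

lemma derivB {c t : ℝ} (hc : 0 < c) (ht : 0 < t) : HasDerivAt (Bq c) (-c * Cq c t) t := by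
  have h := hasDerivAt_tsum_of_isPreconnected (t := Set.Ioi (t/2))
    (g := fun (k:ℕ) t => wq c k * eeq c t k)
    (g' := fun (k:ℕ) t => -c * (((k:ℝ) + 1) * wq c k * eeq c t k))
    (u := fun k : ℕ => c * (((k : ℝ) + 1) * wq c k * eeq c (t/2) k))
    (y₀ := t) (y := t)
    ((sumC hc (half_pos ht)).mul_left c) isOpen_Ioi isPreconnected_Ioi
    (fun k y _ => by
      refine ((eq_deriv c y k).const_mul (wq c k)).congr_deriv ?_
      ring)
    (fun k y hy => by
      have h1 := wq_pos hc k
      have h2 := eq_pos c y k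
      have h3 := eq_anti hc (le_of_lt hy) k
      rw [norm_mul, norm_neg, Real.norm_of_nonneg hc.le, Real.norm_of_nonneg (by positivity)]
      gcongr)
    (by simp; linarith) (sumB hc ht) (by simp; linarith)
  rw [tsum_mul_left] at h
  exact h

lemma derivA {c t : ℝ} (hc : 0 < c) (ht : 0 < t) : HasDerivAt (Aq c) (-c * Bq c t) t := by
  have h := hasDerivAt_tsum_of_isPreconnected (t := Set.Ioi (t/2))
    (g := fun (k:ℕ) t => wq c k / (k + 1) * eeq c t k)
    (g' := fun (k:ℕ) t => -c * (wq c k * eeq c t k))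
    (u := fun k : ℕ => c * (wq c k * eeq c (t/2) k))
    (y₀ := t) (y := t)
    ((sumB hc (half_pos ht)).mul_left c) isOpen_Ioi isPreconnected_Ioi
    (fun k y _ => by
      refine ((eq_deriv c y k).const_mul (wq c k / (k + 1))).congr_deriv ?_
      have : (k:ℝ) + 1 ≠ 0 := by positivity
      field_simp)
    (fun k y hy => by
      have h1 := wq_pos hc k
      have h2 := eq_pos c y k
      have h3 := eq_anti hc (le_of_lt hy) k
      rw [norm_mul, norm_neg, Real.norm_of_nonneg hc.le, Real.norm_of_nonneg (by positivity)]
      gcongr)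
    (by simp; linarith) (sumA hc ht) (by simp; linarith)
  rw [tsum_mul_left] at h
  exact h

/-- secant slope monotonicity of exp at 0 -/
lemma exp_secant {u v : ℝ} (hu : u ≠ 0) (hv : v ≠ 0) (huv : u ≤ v) :
    (Real.exp u - 1) / u ≤ (Real.exp v - 1) / v := by
  have := convexOn_exp.secant_mono (Set.mem_univ 0) (Set.mem_univ u) (Set.mem_univ v) hu hv huv
  simpa using this

noncomputable def kap (c z : ℝ) : ℝ := z / (1 - Real.exp (-(c * z)))

lemma kap_mono {c y z : ℝ} (hc : 0 < c) (hy : 0 < y) (hyz : y ≤ z) : kap c y ≤ kap c z := by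
  have hz : 0 < z := lt_of_lt_of_le hy hyz
  have h1 := exp_lt hc hy
  have h2 := exp_lt hc hz
  have hcy := mul_pos hc hy
  have hcz := mul_pos hc hz
  have := exp_secant (u := -(c * z)) (v := -(c * y)) (by linarith) (by linarith)
    (by nlinarith)
  rw [← neg_div_neg_eq, ← neg_div_neg_eq (Real.exp (-(c * y)) - 1), neg_neg, neg_neg,
    div_le_div_iff₀ hcz hcy] at this
  unfold kap
  rw [div_le_div_iff₀ (by linarith) (by linarith)]
  have h3 : c * (y * (1 - Real.exp (-(c * z)))) ≤ c * (z * (1 - Real.exp (-(c * y)))) := by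
    linarith
  exact le_of_mul_le_mul_left h3 hc

lemma geo {c t : ℝ} (hc : 0 < c) (ht : 0 < t) :
    HasSum (fun k => eeq c t k) (1 / (Real.exp (c * t) - 1)) := by
  have h := (hasSum_geometric_of_lt_one (Real.exp_pos (-(c*t))).le (exp_lt hc ht)).mul_left
    (Real.exp (-(c * t)))
  have e : (fun k => eeq c t k) = fun k : ℕ => Real.exp (-(c*t)) * Real.exp (-(c*t)) ^ k := by
    ext k; rw [eq_pow, pow_succ']
  rw [e]
  suffices e2 : 1 / (Real.exp (c * t) - 1) = Real.exp (-(c*t)) * (1 - Real.exp (-(c*t)))⁻¹ by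
    rw [e2]; exact h
  rw [Real.exp_neg]
  have h1 : 1 < Real.exp (c * t) := Real.one_lt_exp_iff.mpr (mul_pos hc ht)
  have h2 : Real.exp (c * t) - 1 ≠ 0 := by linarith
  have h3 : Real.exp (c * t) ≠ 0 := by positivity
  field_simp

lemma tC_anti {c s t : ℝ} (hc : 0 < c) (ht : 0 < t) (hts : t < s) :
    s * Cq c s ≤ t * Cq c t := by
  have hs : 0 < s := ht.trans hts
  have hd : HasSum (fun k => t * eeq c t k - s * eeq c s k)
      (t * (1 / (Real.exp (c * t) - 1)) - s * (1 / (Real.exp (c * s) - 1))) :=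
    ((geo hc ht).mul_left t).sub ((geo hc hs).mul_left s)
  have hC : HasSum (fun k : ℕ => ((k:ℝ)+1) * wq c k * (t * eeq c t k - s * eeq c s k))
      (t * Cq c t - s * Cq c s) := by
    have := ((sumC hc ht).hasSum.mul_left t).sub ((sumC hc hs).hasSum.mul_left s)
    have e : (fun k : ℕ => ((k:ℝ)+1) * wq c k * (t * eeq c t k - s * eeq c s k)) =
        fun k : ℕ => t * (((k:ℝ) + 1) * wq c k * eeq c t k) - s * ((k + 1) * wq c k * eeq c s k) := by
      ext k; ring
    rw [e]; exact this
  set z := Real.log (s / t) / (c * (s - t)) with hz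
  have hst : 0 < s - t := by linarith
  have hlog : 0 < Real.log (s / t) := Real.log_pos (by rw [lt_div_iff₀ ht]; linarith)
  have hz0 : 0 < z := by positivity
  have hK : 0 < kap c z := by
    have := exp_lt hc hz0
    unfold kap
    apply div_pos hz0; linarith
  have key : kap c z * (t * (1 / (Real.exp (c * t) - 1)) - s * (1 / (Real.exp (c * s) - 1)))
      ≤ t * Cq c t - s * Cq c s := by
    refine hasSum_le (fun k => ?_) (hd.mul_left (kap c z)) hC
    have hw : ((k:ℝ)+1) * wq c k = kap c ((k:ℝ)+1) := by
      unfold wq kap; ring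
    rw [hw]
    have hk : (0:ℝ) < (k:ℝ) + 1 := by positivity
    have hzl : c * (s - t) * z = Real.log s - Real.log t := by
      rw [hz, ← Real.log_div hs.ne' ht.ne']; field_simp
    have e1 : t * eeq c t k = Real.exp (Real.log t - c * (k+1) * t) := by
      unfold eeq; rw [sub_eq_add_neg, Real.exp_add, Real.exp_log ht]
    have e2 : s * eeq c s k = Real.exp (Real.log s - c * (k+1) * s) := by
      unfold eeq; rw [sub_eq_add_neg, Real.exp_add, Real.exp_log hs]
    have hp : 0 < c * (s - t) := by positivity
    rcases le_total z ((k:ℝ)+1) with hle | hle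
    · apply mul_le_mul_of_nonneg_right (kap_mono hc hz0 hle)
      rw [e1, e2, sub_nonneg, Real.exp_le_exp]
      have := mul_le_mul_of_nonneg_left hle hp.le
      linarith
    · apply mul_le_mul_of_nonpos_right (kap_mono hc hk hle)
      rw [e1, e2, sub_nonpos, Real.exp_le_exp]
      have := mul_le_mul_of_nonneg_left hle hp.le
      linarith
  have hfin : 0 ≤ t * (1 / (Real.exp (c * t) - 1)) - s * (1 / (Real.exp (c * s) - 1)) := by
    have hct := mul_pos hc ht
    have hcs := mul_pos hc hs
    have := exp_secant (u := c * t) (v := c * s) hct.ne' hcs.ne' (by nlinarith)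
    have h1 : 1 < Real.exp (c * t) := Real.one_lt_exp_iff.mpr hct
    have h2 : 1 < Real.exp (c * s) := Real.one_lt_exp_iff.mpr hcs
    rw [div_le_div_iff₀ hct hcs] at this
    rw [sub_nonneg, mul_one_div, mul_one_div, div_le_div_iff₀ (by linarith) (by linarith)]
    refine le_of_mul_le_mul_left ?_ hc
    linarith
  have := mul_nonneg hK.le hfin
  linarith

lemma B_anti {c s t : ℝ} (hc : 0 < c) (ht : 0 < t) (hts : t ≤ s) : Bq c s ≤ Bq c t := by
  refine Summable.tsum_le_tsum (fun k => ?_) (sumB hc (ht.trans_le hts)) (sumB hc ht)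
  exact mul_le_mul_of_nonneg_left (eq_anti hc hts k) (wq_pos hc k).le

lemma E_anti {c a b x y : ℝ} (hc : 0 < c) (ha : 0 < a) (hab : a < b) (hx : 0 < x) (hxy : x < y) :
    Bq c (a * y) - Bq c (b * y) ≤ Bq c (a * x) - Bq c (b * x) := by
  have hb := ha.trans hab
  have hder : ∀ z, 0 < z → HasDerivAt (fun z => Bq c (a * z) - Bq c (b * z))
      ((-c * Cq c (a * z)) * a - (-c * Cq c (b * z)) * b) z := by
    intro z hz
    have h1 := (derivB hc (mul_pos ha hz)).comp z (hasDerivAt_const_mul a)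
    have h2 := (derivB hc (mul_pos hb hz)).comp z (hasDerivAt_const_mul b)
    exact h1.sub h2
  obtain ⟨ξ, hξ, he⟩ := exists_hasDerivAt_eq_slope _ _ hxy
    (fun z hz => (hder z (hx.trans_le hz.1)).continuousAt.continuousWithinAt)
    (fun z hz => hder z (hx.trans hz.1))
  have hξ0 : 0 < ξ := hx.trans hξ.1
  have h := tC_anti hc (mul_pos ha hξ0) (show a * ξ < b * ξ by nlinarith)
  have h' : b * Cq c (b * ξ) ≤ a * Cq c (a * ξ) := by
    refine le_of_mul_le_mul_left ?_ hξ0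
    linarith
  have h3 := mul_le_mul_of_nonneg_left h' hc.le
  rw [eq_div_iff (by linarith)] at he
  have : ((-c * Cq c (a * ξ)) * a - (-c * Cq c (b * ξ)) * b) * (y - x) ≤ 0 :=
    mul_nonpos_of_nonpos_of_nonneg (by linarith) (by linarith)
  linarith

lemma F_bounds {c a b x y : ℝ} (hc : 0 < c) (ha : 0 < a) (hab : a < b) (hx : 0 < x) (hxy : x < y) :
    (y - x) * (-c * (Bq c (a * x) - Bq c (b * x))) ≤
      (Aq c (a * y) / a - Aq c (b * y) / b) - (Aq c (a * x) / a - Aq c (b * x) / b) ∧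
    (Aq c (a * y) / a - Aq c (b * y) / b) - (Aq c (a * x) / a - Aq c (b * x) / b) ≤ 0 := by
  have hb := ha.trans hab
  have hder : ∀ z, 0 < z → HasDerivAt (fun z => Aq c (a * z) / a - Aq c (b * z) / b)
      (-c * (Bq c (a * z) - Bq c (b * z))) z := by
    intro z hz
    have h1 := ((derivA hc (mul_pos ha hz)).comp z (hasDerivAt_const_mul a)).div_const a
    have h2 := ((derivA hc (mul_pos hb hz)).comp z (hasDerivAt_const_mul b)).div_const b
    refine (h1.sub h2).congr_deriv ?_
    field_simp
    ring
  obtain ⟨ξ, hξ, he⟩ := exists_hasDerivAt_eq_slope _ _ hxy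
    (fun z hz => (hder z (hx.trans_le hz.1)).continuousAt.continuousWithinAt)
    (fun z hz => hder z (hx.trans hz.1))
  have hξ0 : 0 < ξ := hx.trans hξ.1
  have h1 := E_anti hc ha hab hx hξ.1
  have h2 := B_anti hc (mul_pos ha hξ0) (show a * ξ ≤ b * ξ by nlinarith)
  rw [eq_div_iff (by linarith)] at he
  have hp : 0 < y - x := by linarith
  rw [← he]
  constructor
  · rw [mul_comm (y - x)]
    apply mul_le_mul_of_nonneg_right _ hp.le
    have := mul_le_mul_of_nonneg_left h1 hc.le
    linarith
  · apply mul_nonpos_of_nonpos_of_nonneg _ hp.le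
    have := mul_nonneg hc.le (sub_nonneg.mpr h2)
    linarith

lemma log_sum {c t : ℝ} (hc : 0 < c) (ht : 0 < t) :
    HasSum (fun j : ℕ => -Real.log (1 - Real.exp (-(c * (j + t))))) (Aq c t) := by
  let f : ℕ × ℕ → ℝ := fun p => Real.exp (-(c * (p.1 + 1) * (p.2 + t))) / (p.1 + 1)
  have hrow : ∀ k : ℕ, HasSum (fun j : ℕ => f (k, j)) (wq c k / (k + 1) * eeq c t k) := by
    intro k
    have h := (hasSum_geometric_of_lt_one (Real.exp_pos (-(c*((k:ℝ)+1)))).le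
      (exp_lt hc (by positivity))).mul_left (eeq c t k / (k + 1))
    have e1 : (fun j : ℕ => f (k, j)) =
        fun j : ℕ => eeq c t k / (k + 1) * Real.exp (-(c * ((k:ℝ) + 1))) ^ j := by
      ext j
      simp only [f, eeq]
      rw [← Real.exp_nat_mul, div_mul_eq_mul_div, ← Real.exp_add]
      congr 2; ring
    have e2 : wq c k / (k + 1) * eeq c t k =
        eeq c t k / (k + 1) * (1 - Real.exp (-(c * ((k:ℝ) + 1))))⁻¹ := by
      unfold wq; ring
    rw [e1, e2]; exact h
  have hs : Summable f := by
    rw [summable_prod_of_nonneg (fun p => by simp only [f, Pi.zero_apply]; positivity)]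
    refine ⟨fun k => (hrow k).summable, ?_⟩
    simp only [(hrow _).tsum_eq]
    exact sumA hc ht
  have hf : HasSum f (Aq c t) := by
    have := hs.hasSum.prod_fiberwise hrow
    have e : Aq c t = ∑' p, f p := this.tsum_eq
    rw [e]; exact hs.hasSum
  have hf' : HasSum (fun p : ℕ × ℕ => f (p.2, p.1)) (Aq c t) := by
    have := (Equiv.prodComm ℕ ℕ).hasSum_iff.mpr hf
    exact this
  refine hf'.prod_fiberwise (fun j => ?_)
  have h := Real.hasSum_pow_div_log_of_abs_lt_one (x := Real.exp (-(c * (j + t))))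
    (by rw [abs_of_pos (Real.exp_pos _)]; exact exp_lt hc (by positivity))
  have e : (fun k : ℕ => f (k, j)) =
      fun k : ℕ => Real.exp (-(c * (j + t))) ^ (k + 1) / ((k:ℝ) + 1) := by
    ext k
    simp only [f]
    rw [← Real.exp_nat_mul]
    congr 2; push_cast; ring
  simp only [e]; exact h

lemma rp (c y : ℝ) : (Real.exp (-c)) ^ y = Real.exp (-(c * y)) := by
  rw [← Real.exp_mul]; congr 1; ring

lemma np (c : ℝ) (k : ℕ) : (Real.exp (-c)) ^ k = Real.exp (-(c * k)) := by
  rw [← Real.exp_nat_mul]; congr 1; ring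

lemma qGamma_eq {c t : ℝ} (hc : 0 < c) (ht : 0 < t) :
    qGamma (Real.exp (-c)) t =
      Real.exp ((1 - t) * Real.log (1 - Real.exp (-c)) + (Aq c t - Aq c 1)) := by
  have h := ((log_sum hc ht).sub (log_sum hc one_pos)).rexp
  have hq : 0 < 1 - Real.exp (-c) := by
    have := exp_lt hc one_pos
    rw [mul_one] at this; linarith
  unfold qGamma
  rw [Real.exp_add, Real.rpow_def_of_pos hq, mul_comm (Real.log _), ← h.tprod_eq]
  congr 2
  ext j
  have h1 : 0 < 1 - Real.exp (-(c * (j + t))) := by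
    have := exp_lt hc (show 0 < (j:ℝ) + t by positivity); linarith
  have h2 : 0 < 1 - Real.exp (-(c * (j + 1))) := wq_den_pos hc j
  simp only [Function.comp]
  rw [rp, np, neg_sub_neg, Real.exp_sub, Real.exp_log h1, Real.exp_log h2]
  push_cast; rfl

lemma qDigamma_eq (c t : ℝ) :
    qDigamma (Real.exp (-c)) t = -Real.log (1 - Real.exp (-c)) - c * Bq c t := by
  unfold qDigamma Bq
  rw [Real.log_exp]
  have : ∀ k : ℕ, (Real.exp (-c)) ^ (((k : ℝ) + 1) * t) / (1 - Real.exp (-c) ^ (k + 1))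
      = wq c k * eeq c t k := by
    intro k
    rw [rp, np]; unfold wq eeq; push_cast
    rw [one_div_mul_eq_div, mul_assoc]
  simp only [this]; ring

theorem stmt5 (q a b α β x x₁ : ℝ) (hq0 : 0 < q) (hq1 : q < 1) (ha : 0 < a) (hab : a < b)
    (hα : 0 ≤ α) (hβ : 0 ≤ β) (h : α * a = β * b) (hx₁ : 0 < x₁) (hx : x₁ < x) :
    Real.exp (α * a * (x - x₁) * (qDigamma q (a * x₁) - qDigamma q (b * x₁))) ≤
      (qGamma q (b * x₁)) ^ β / (qGamma q (a * x₁)) ^ α *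
        ((qGamma q (a * x)) ^ α / (qGamma q (b * x)) ^ β) ∧
    (qGamma q (b * x₁)) ^ β / (qGamma q (a * x₁)) ^ α *
        ((qGamma q (a * x)) ^ α / (qGamma q (b * x)) ^ β) ≤ 1 := by
  obtain ⟨c, rfl⟩ : ∃ c, q = Real.exp (-c) := ⟨-Real.log q, by rw [neg_neg, Real.exp_log hq0]⟩
  have hc : 0 < c := by
    rw [Real.exp_lt_one_iff] at hq1; linarith
  have hb := ha.trans hab
  have hx0 := hx₁.trans hx
  obtain ⟨h1, h2⟩ := F_bounds hc ha hab hx₁ hx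
  have hm : 0 ≤ α * a := by positivity
  have hαA : ∀ u v, α * a * ((u / a - v / b)) = α * u - β * v := by
    intro u v
    rw [mul_sub]
    nth_rewrite 2 [h]
    field_simp
  have main : (qGamma (Real.exp (-c)) (b * x₁)) ^ β / (qGamma (Real.exp (-c)) (a * x₁)) ^ α *
        ((qGamma (Real.exp (-c)) (a * x)) ^ α / (qGamma (Real.exp (-c)) (b * x)) ^ β)
      = Real.exp (α * a * ((Aq c (a * x) / a - Aq c (b * x) / b)
          - (Aq c (a * x₁) / a - Aq c (b * x₁) / b))) := by
    rw [qGamma_eq hc (mul_pos ha hx₁), qGamma_eq hc (mul_pos hb hx₁),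
      qGamma_eq hc (mul_pos ha hx0), qGamma_eq hc (mul_pos hb hx0)]
    simp only [← Real.exp_mul, ← Real.exp_sub, ← Real.exp_add]
    rw [mul_sub (α * a), hαA, hαA]
    congr 1
    linear_combination (x₁ - x) * Real.log (1 - Real.exp (-c)) * h
  rw [main, qDigamma_eq, qDigamma_eq]
  constructor
  · apply Real.exp_le_exp.mpr
    have := mul_le_mul_of_nonneg_left h1 hm
    refine le_trans (le_of_eq ?_) this
    ring
  · rw [Real.exp_le_one_iff]
    exact mul_nonpos_of_nonneg_of_nonpos hm h2
end

section
/- Let 0<q<1 and let β be a real number with β ≥ −13 ln q/(6(1−q²)). Then the function g_β(q;·) defined for x>0 by g_β(q;x) = (1/(1+q))·[Γ_{q²}(x+1/2)/Γ_{q²}(x+1)]²·exp[β(1−q²)q^{2x}/(2(1−q^{2x})) + ψ_q(2x)] is logarithmically completely monotonic on (0,∞). -/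
/-- A positive function `f` is logarithmically completely monotonic on `s`:
`ln f` has derivatives of all orders on `s` and `(-1)^n (ln f)^(n)(x) ≥ 0`
for all `x ∈ s` and all `n ≥ 1`. -/
def LogCompletelyMonotonicOn (f : ℝ → ℝ) (s : Set ℝ) : Prop :=
  (∀ x ∈ s, 0 < f x) ∧
  ContDiffOn ℝ (⊤ : ℕ∞) (fun y => Real.log (f y)) s ∧
  ∀ n : ℕ, 1 ≤ n → ∀ x ∈ s, 0 ≤ (-1 : ℝ) ^ n * iteratedDeriv n (fun y => Real.log (f y)) x

open Real Set Filter Topology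

lemma aux_ineq (t : ℝ) (ht : 0 ≤ t) :
    0 ≤ t * exp t ^ 2 / 12 + (2 - t) * exp t - 2 - 13 * t / 12 := by
  have d1 : ∀ t : ℝ, HasDerivAt (fun t : ℝ => t * exp t ^ 2 / 12 + (2 - t) * exp t - 2 - 13 * t / 12)
      (exp t ^ 2 / 12 + t * exp t ^ 2 / 6 + (1 - t) * exp t - 13 / 12) t := by
    intro t
    have h := ((((hasDerivAt_id t).mul ((Real.hasDerivAt_exp t).pow 2)).div_const 12).add
      (((hasDerivAt_id t).const_sub 2).mul (Real.hasDerivAt_exp t))).sub_const 2 |>.sub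
      (((hasDerivAt_id t).const_mul 13).div_const 12)
    refine h.congr_deriv ?_
    simp; ring
  have d2 : ∀ t : ℝ, HasDerivAt
      (fun t : ℝ => exp t ^ 2 / 12 + t * exp t ^ 2 / 6 + (1 - t) * exp t - 13 / 12)
      (exp t * (exp t / 3 + t * exp t / 3 - t)) t := by
    intro t
    have h := ((((Real.hasDerivAt_exp t).pow 2).div_const 12).add
      (((hasDerivAt_id t).mul ((Real.hasDerivAt_exp t).pow 2)).div_const 6)).add
      (((hasDerivAt_id t).const_sub 1).mul (Real.hasDerivAt_exp t)) |>.sub_const (13/12)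
    refine h.congr_deriv ?_
    simp; ring
  have m2 : MonotoneOn (fun t : ℝ => exp t ^ 2 / 12 + t * exp t ^ 2 / 6 + (1 - t) * exp t - 13 / 12)
      (Ici 0) := by
    refine monotoneOn_of_hasDerivWithinAt_nonneg (convex_Ici 0)
      (fun x _ => (d2 x).continuousAt.continuousWithinAt)
      (fun x _ => (d2 x).hasDerivWithinAt) ?_
    intro x hx
    rw [interior_Ici] at hx
    have hx0 : 0 < x := hx
    have := Real.add_one_le_exp x
    refine mul_nonneg (exp_pos x).le ?_
    nlinarith [sq_nonneg (x - 1)]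
  have m1 : MonotoneOn (fun t : ℝ => t * exp t ^ 2 / 12 + (2 - t) * exp t - 2 - 13 * t / 12)
      (Ici 0) := by
    refine monotoneOn_of_hasDerivWithinAt_nonneg (convex_Ici 0)
      (fun x _ => (d1 x).continuousAt.continuousWithinAt)
      (fun x _ => (d1 x).hasDerivWithinAt) ?_
    intro x hx
    rw [interior_Ici] at hx
    have hx0 : 0 < x := hx
    have := m2 (show (0:ℝ) ∈ Ici 0 by simp) (show x ∈ Ici 0 from hx0.le) hx0.le
    simp only [Real.exp_zero] at this
    linarith
  have := m1 (show (0:ℝ) ∈ Ici 0 by simp) (show t ∈ Ici 0 from ht) ht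
  simp only [Real.exp_zero] at this
  linarith

/-- coefficient inequality -/
lemma aux_coef (q : ℝ) (hq0 : 0 < q) (hq1 : q < 1) (k : ℕ) :
    0 ≤ 2 * q ^ (k + 1) / (((k : ℝ) + 1) * (1 + q ^ (k + 1))) + 13 * (-Real.log q) / 12
      - (-Real.log q) / (1 - q ^ (k + 1)) := by
  have hL : 0 < -Real.log q := by linarith [Real.log_neg hq0 hq1]
  have hk : (0 : ℝ) < (k : ℝ) + 1 := by positivity
  have h := aux_ineq (((k : ℝ) + 1) * (-Real.log q)) (by positivity)
  have hE : exp (((k : ℝ) + 1) * (-Real.log q)) = (q ^ (k + 1))⁻¹ := by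
    rw [mul_neg, Real.exp_neg, mul_comm, Real.exp_mul, Real.exp_log hq0]
    norm_cast
  rw [hE] at h
  have hu0 : 0 < q ^ (k + 1) := by positivity
  have hu1 : q ^ (k + 1) < 1 := pow_lt_one₀ hq0.le hq1 (by omega)
  generalize q ^ (k + 1) = u at *
  generalize -Real.log q = L at *
  generalize (k : ℝ) + 1 = m at *
  have h1 : 0 < 1 - u := by linarith
  have key : 2 * u / (m * (1 + u)) + 13 * L / 12 - L / (1 - u) =
      (m * L * u⁻¹ ^ 2 / 12 + (2 - m * L) * u⁻¹ - 2 - 13 * (m * L) / 12) *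
        (u ^ 2 / (m * (1 + u) * (1 - u))) := by
    field_simp
    ring
  rw [key]
  exact mul_nonneg h (by positivity)

lemma aux_hasSum_congr {f g : ℕ → ℝ} {a : ℝ} (h : ∀ k, f k = g k) : HasSum f a ↔ HasSum g a := by
  rw [funext h]

lemma aux_logsum (p w : ℝ) (hp0 : 0 < p) (hp1 : p < 1) (hw0 : 0 < w) (hw1 : w < 1) :
    Summable (fun k : ℕ => w ^ (k + 1) / (((k : ℝ) + 1) * (1 - p ^ (k + 1)))) ∧
    HasSum (fun j : ℕ => -Real.log (1 - p ^ j * w))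
      (∑' k : ℕ, w ^ (k + 1) / (((k : ℝ) + 1) * (1 - p ^ (k + 1)))) := by
  have hs : Summable (fun k : ℕ => w ^ (k + 1) / (((k : ℝ) + 1) * (1 - p ^ (k + 1)))) := by
    have hg : Summable (fun k : ℕ => w ^ k * (1 / (1 - p))) :=
      (summable_geometric_of_lt_one hw0.le hw1).mul_right _
    refine Summable.of_nonneg_of_le (fun k => ?_) (fun k => ?_) hg
    · have : p ^ (k + 1) < 1 := pow_lt_one₀ hp0.le hp1 (by omega)
      have : 0 < 1 - p ^ (k + 1) := by linarith
      positivity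
    · have h1 : p ^ (k + 1) ≤ p := by
        rw [pow_succ]; exact mul_le_of_le_one_left hp0.le (pow_le_one₀ hp0.le hp1.le)
      have h2 : 0 < 1 - p := by linarith
      have h3 : w ^ (k + 1) ≤ w ^ k := by
        rw [pow_succ]; exact mul_le_of_le_one_right (by positivity) hw1.le
      have h4 : 1 - p ≤ ((k : ℝ) + 1) * (1 - p ^ (k + 1)) := by
        have : (0:ℝ) ≤ k := by positivity
        nlinarith
      rw [mul_one_div]
      exact div_le_div₀ (by positivity) h3 h2 h4
  refine ⟨hs, ?_⟩
  have hcol : ∀ k : ℕ, HasSum (fun j : ℕ => (p ^ j * w) ^ (k + 1) / ((k : ℝ) + 1))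
      (w ^ (k + 1) / (((k : ℝ) + 1) * (1 - p ^ (k + 1)))) := by
    intro k
    have h1 : p ^ (k + 1) < 1 := pow_lt_one₀ hp0.le hp1 (by omega)
    have h := (hasSum_geometric_of_lt_one (by positivity) h1).mul_left (w ^ (k + 1) / ((k : ℝ) + 1))
    rw [← div_div, div_eq_mul_inv _ (1 - p ^ (k + 1))]
    refine (aux_hasSum_congr (fun j => ?_)).mpr h
    rw [mul_pow, ← pow_mul, ← pow_mul, mul_comm j]; ring
  have hrow : ∀ j : ℕ, HasSum (fun k : ℕ => (p ^ j * w) ^ (k + 1) / ((k : ℝ) + 1))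
      (-Real.log (1 - p ^ j * w)) := by
    intro j
    apply Real.hasSum_pow_div_log_of_abs_lt_one
    rw [abs_of_pos (by positivity)]
    calc p ^ j * w ≤ 1 * w := by gcongr; exact pow_le_one₀ hp0.le hp1.le
      _ < 1 := by linarith
  have hprod : Summable (fun x : ℕ × ℕ => (p ^ x.2 * w) ^ (x.1 + 1) / ((x.1 : ℝ) + 1)) := by
    rw [summable_prod_of_nonneg (fun x => by simp only [Pi.zero_apply]; positivity)]
    refine ⟨fun k => (hcol k).summable, ?_⟩
    refine hs.congr (fun k => ?_)
    exact (hcol k).tsum_eq.symm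
  have hA := hprod.hasSum
  have e1 := hA.prod_fiberwise (fun k => hcol k)
  have hB := (Equiv.prodComm ℕ ℕ).hasSum_iff.mpr hA
  have e2 := hB.prod_fiberwise (fun j => hrow j)
  rw [e1.tsum_eq]
  exact e2

lemma aux_qGamma (p y : ℝ) (hp0 : 0 < p) (hp1 : p < 1) (hy : 0 < y) :
    qGamma p y = (1 - p) ^ (1 - y) *
      exp ((∑' k : ℕ, (p ^ y) ^ (k + 1) / (((k : ℝ) + 1) * (1 - p ^ (k + 1)))) -
        ∑' k : ℕ, p ^ (k + 1) / (((k : ℝ) + 1) * (1 - p ^ (k + 1)))) := by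
  have hw0 : 0 < p ^ y := rpow_pos_of_pos hp0 y
  have hw1 : p ^ y < 1 := rpow_lt_one hp0.le hp1 hy
  have hy' := (aux_logsum p (p ^ y) hp0 hp1 hw0 hw1).2
  have h1 := (aux_logsum p p hp0 hp1 hp0 hp1).2
  have pw : ∀ w : ℝ, 0 < w → w < 1 → ∀ j : ℕ, 0 < 1 - p ^ j * w := by
    intro w hw0 hw1 j
    have : p ^ j * w ≤ 1 * w := by gcongr; exact pow_le_one₀ hp0.le hp1.le
    linarith
  have hterm : ∀ j : ℕ, (1 - p ^ (j + 1)) / (1 - p ^ ((j : ℝ) + y)) =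
      (1 - p ^ j * p) / (1 - p ^ j * p ^ y) := by
    intro j
    rw [rpow_add hp0, rpow_natCast, pow_succ]
  have hl : HasSum (fun j : ℕ => Real.log ((1 - p ^ (j + 1)) / (1 - p ^ ((j : ℝ) + y))))
      ((∑' k : ℕ, (p ^ y) ^ (k + 1) / (((k : ℝ) + 1) * (1 - p ^ (k + 1)))) -
        ∑' k : ℕ, p ^ (k + 1) / (((k : ℝ) + 1) * (1 - p ^ (k + 1)))) := by
    refine (aux_hasSum_congr (fun j => ?_)).mpr (hy'.sub h1)
    rw [hterm, Real.log_div (pw p hp0 hp1 j).ne' (pw _ hw0 hw1 j).ne']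
    ring
  rw [qGamma, ← hl.tsum_eq, Real.rexp_tsum_eq_tprod _ hl.summable]
  intro j
  rw [hterm]
  exact div_pos (pw p hp0 hp1 j) (pw _ hw0 hw1 j)

/-- the n-th derivative series -/
noncomputable def auxF (a : ℝ) (c : ℕ → ℝ) (n : ℕ) (x : ℝ) : ℝ :=
  ∑' k : ℕ, c k * (-(a * ((k : ℝ) + 1))) ^ n * exp (-(a * ((k : ℝ) + 1)) * x)

lemma auxF_summable_bound (a C : ℝ) (ha : 0 < a) (n : ℕ) (δ : ℝ) (hδ : 0 < δ) :
    Summable (fun k : ℕ => C * (a * ((k : ℝ) + 1)) ^ n * exp (-(a * ((k : ℝ) + 1)) * δ)) := by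
  have h := Real.summable_pow_mul_exp_neg_nat_mul n (r := a * δ) (by positivity)
  have h2 := ((summable_nat_add_iff 1).mpr h).mul_left (C * a ^ n)
  refine h2.congr (fun k => ?_)
  push_cast
  rw [mul_pow]
  ring_nf

lemma auxF_hasDerivAt (a C : ℝ) (ha : 0 < a) (c : ℕ → ℝ) (hc : ∀ k, |c k| ≤ C) (n : ℕ) (x : ℝ)
    (hx : 0 < x) : HasDerivAt (auxF a c n) (auxF a c (n + 1) x) x := by
  have hbd : ∀ (m : ℕ) (k : ℕ) (y : ℝ), y ∈ Ioi (x / 2) →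
      ‖c k * (-(a * ((k : ℝ) + 1))) ^ m * exp (-(a * ((k : ℝ) + 1)) * y)‖ ≤
      C * (a * ((k : ℝ) + 1)) ^ m * exp (-(a * ((k : ℝ) + 1)) * (x / 2)) := by
    intro m k y hy
    have hy' : x / 2 < y := hy
    have hC : 0 ≤ C := (abs_nonneg _).trans (hc k)
    have hp : 0 < a * ((k : ℝ) + 1) := by positivity
    rw [norm_mul, norm_mul, norm_pow, norm_neg, Real.norm_of_nonneg hp.le,
      Real.norm_of_nonneg (exp_pos _).le, Real.norm_eq_abs]
    have he : exp (-(a * ((k : ℝ) + 1)) * y) ≤ exp (-(a * ((k : ℝ) + 1)) * (x / 2)) :=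
      exp_le_exp.mpr (by nlinarith)
    exact mul_le_mul (mul_le_mul_of_nonneg_right (hc k) (by positivity)) he (exp_pos _).le
      (by positivity)
  have hxm : x ∈ Ioi (x / 2) := by simp only [mem_Ioi]; linarith
  refine hasDerivAt_tsum_of_isPreconnected
    (g := fun k y => c k * (-(a * ((k : ℝ) + 1))) ^ n * exp (-(a * ((k : ℝ) + 1)) * y))
    (g' := fun k y => c k * (-(a * ((k : ℝ) + 1))) ^ (n + 1) * exp (-(a * ((k : ℝ) + 1)) * y))
    (auxF_summable_bound a C ha (n + 1) (x / 2) (by positivity))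
    isOpen_Ioi isPreconnected_Ioi ?_ (hbd (n + 1)) hxm ?_ hxm
  · intro k y _
    have h := (((hasDerivAt_id y).const_mul (-(a * ((k : ℝ) + 1)))).exp).const_mul
      (c k * (-(a * ((k : ℝ) + 1))) ^ n)
    refine h.congr_deriv ?_
    simp only [id]
    ring
  · exact Summable.of_norm_bounded (auxF_summable_bound a C ha n (x / 2) (by positivity))
      (fun k => hbd n k x hxm)

lemma auxF_contDiffOn (a C : ℝ) (ha : 0 < a) (c : ℕ → ℝ) (hc : ∀ k, |c k| ≤ C) (N : ℕ) :
    ∀ n : ℕ, ContDiffOn ℝ N (auxF a c n) (Ioi 0) := by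
  induction N with
  | zero =>
    intro n
    exact contDiffOn_zero.mpr (fun x hx =>
      (auxF_hasDerivAt a C ha c hc n x hx).continuousAt.continuousWithinAt)
  | succ N ih =>
    intro n
    push_cast
    rw [contDiffOn_succ_iff_deriv_of_isOpen isOpen_Ioi]
    refine ⟨fun x hx =>
      (auxF_hasDerivAt a C ha c hc n x hx).differentiableAt.differentiableWithinAt, by simp, ?_⟩
    exact (ih (n + 1)).congr (fun x hx => (auxF_hasDerivAt a C ha c hc n x hx).deriv)

lemma auxF_iteratedDeriv (a C : ℝ) (ha : 0 < a) (c : ℕ → ℝ) (hc : ∀ k, |c k| ≤ C) (f : ℝ → ℝ)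
    (hf : ∀ x ∈ Ioi (0:ℝ), f x = auxF a c 0 x) (n : ℕ) :
    ∀ x ∈ Ioi (0:ℝ), iteratedDeriv n f x = auxF a c n x := by
  induction n with
  | zero => intro x hx; rw [iteratedDeriv_zero]; exact hf x hx
  | succ n ih =>
    intro x hx
    rw [iteratedDeriv_succ]
    have : iteratedDeriv n f =ᶠ[𝓝 x] auxF a c n := by
      filter_upwards [isOpen_Ioi.mem_nhds hx] with y hy using ih y hy
    rw [this.deriv_eq]
    exact (auxF_hasDerivAt a C ha c hc n x hx).deriv

lemma auxF_nonneg (a : ℝ) (ha : 0 < a) (c : ℕ → ℝ) (hc : ∀ k, 0 ≤ c k) (n : ℕ) (x : ℝ) :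
    0 ≤ (-1 : ℝ) ^ n * auxF a c n x := by
  rw [auxF, ← tsum_mul_left]
  refine tsum_nonneg (fun k => ?_)
  have : (-1 : ℝ) ^ n * (c k * (-(a * ((k : ℝ) + 1))) ^ n * exp (-(a * ((k : ℝ) + 1)) * x)) =
      c k * (a * ((k : ℝ) + 1)) ^ n * exp (-(a * ((k : ℝ) + 1)) * x) := by
    have : (a * ((k : ℝ) + 1)) ^ n = (-1 : ℝ) ^ n * (-(a * ((k : ℝ) + 1))) ^ n := by
      rw [← mul_pow]; ring_nf
    rw [this]; ring
  rw [this]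
  have := hc k
  positivity

/-- the coefficients -/
noncomputable def auxc (q β : ℝ) (k : ℕ) : ℝ :=
  2 * q ^ (k + 1) / (((k : ℝ) + 1) * (1 + q ^ (k + 1))) + β * (1 - q ^ 2) / 2
      - (-Real.log q) / (1 - q ^ (k + 1))

lemma auxc_nonneg (q β : ℝ) (hq0 : 0 < q) (hq1 : q < 1)
    (hβ : β ≥ -13 * Real.log q / (6 * (1 - q ^ 2))) (k : ℕ) : 0 ≤ auxc q β k := by
  have h := aux_coef q hq0 hq1 k
  have h2 : 0 < 1 - q ^ 2 := by nlinarith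
  have h3 : -13 * Real.log q ≤ β * (6 * (1 - q ^ 2)) := (div_le_iff₀ (by positivity)).mp hβ
  unfold auxc
  linarith

lemma auxc_bound (q β : ℝ) (hq0 : 0 < q) (hq1 : q < 1)
    (hβ : β ≥ -13 * Real.log q / (6 * (1 - q ^ 2))) (k : ℕ) :
    |auxc q β k| ≤ 2 + β * (1 - q ^ 2) / 2 := by
  rw [abs_of_nonneg (auxc_nonneg q β hq0 hq1 hβ k)]
  have hL : 0 < -Real.log q := by linarith [Real.log_neg hq0 hq1]
  have hu1 : q ^ (k + 1) < 1 := pow_lt_one₀ hq0.le hq1 (by omega)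
  have h1 : 0 ≤ (-Real.log q) / (1 - q ^ (k + 1)) := div_nonneg hL.le (by linarith)
  have hu0 : 0 < q ^ (k + 1) := by positivity
  have h2 : 2 * q ^ (k + 1) / (((k : ℝ) + 1) * (1 + q ^ (k + 1))) ≤ 2 := by
    rw [div_le_iff₀ (by positivity)]
    have : (0:ℝ) ≤ k := by positivity
    nlinarith [mul_nonneg this hu0.le]
  unfold auxc
  linarith

lemma aux_main (q β x : ℝ) (hq0 : 0 < q) (hq1 : q < 1) (hx : 0 < x) :
    1 / (1 + q) * (qGamma (q ^ 2) (x + 1 / 2) / qGamma (q ^ 2) (x + 1)) ^ 2 *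
        Real.exp (β * (1 - q ^ 2) * q ^ (2 * x) / (2 * (1 - q ^ (2 * x))) + qDigamma q (2 * x)) =
      exp (auxF (2 * -Real.log q) (auxc q β) 0 x) := by
  have hp0 : 0 < q ^ 2 := by positivity
  have hp1 : q ^ 2 < 1 := by nlinarith
  rw [aux_qGamma _ _ hp0 hp1 (by linarith), aux_qGamma _ _ hp0 hp1 (by linarith)]
  obtain ⟨z, hz⟩ : ∃ z, z = q ^ (2 * x) := ⟨_, rfl⟩
  have hz0 : 0 < z := hz ▸ rpow_pos_of_pos hq0 _
  have hz1 : z < 1 := hz ▸ rpow_lt_one hq0.le hq1 (by linarith)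
  have hpx : ((q ^ 2 : ℝ)) ^ x = z := by
    rw [hz, Real.rpow_mul hq0.le]; norm_cast
  have hph : ((q ^ 2 : ℝ)) ^ (x + 1 / 2) = z * q := by
    rw [rpow_add hp0, hpx, ← Real.sqrt_eq_rpow, Real.sqrt_sq hq0.le]
  have hpo : ((q ^ 2 : ℝ)) ^ (x + 1) = z * q ^ 2 := by
    rw [rpow_add hp0, hpx, rpow_one]
  rw [hph, hpo, ← hz]
  have s1 := (aux_logsum (q ^ 2) (z * q) hp0 hp1 (by positivity) (by nlinarith)).1
  have s2 := (aux_logsum (q ^ 2) (z * q ^ 2) hp0 hp1 (by positivity) (by nlinarith)).1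
  have s3 := hasSum_geometric_of_lt_one hz0.le hz1
  have s3' : HasSum (fun k : ℕ => β * (1 - q ^ 2) / 2 * z ^ (k + 1))
      (β * (1 - q ^ 2) * z / (2 * (1 - z))) := by
    have hv : β * (1 - q ^ 2) * z / (2 * (1 - z)) = β * (1 - q ^ 2) / 2 * z * (1 - z)⁻¹ := by
      rw [← div_div]; ring
    rw [hv]
    refine (aux_hasSum_congr (fun k => ?_)).mpr (s3.mul_left (β * (1 - q ^ 2) / 2 * z))
    rw [pow_succ]; ring
  have hterm : ∀ k : ℕ, q ^ (((k : ℝ) + 1) * (2 * x)) = z ^ (k + 1) := by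
    intro k
    rw [hz, mul_comm, Real.rpow_mul hq0.le]; norm_cast
  have s4 : Summable (fun k : ℕ => q ^ (((k : ℝ) + 1) * (2 * x)) / (1 - q ^ (k + 1))) := by
    have hg : Summable (fun k : ℕ => z ^ k * (1 / (1 - q))) :=
      (summable_geometric_of_lt_one hz0.le hz1).mul_right _
    refine Summable.of_nonneg_of_le (fun k => ?_) (fun k => ?_) hg
    · have : q ^ (k + 1) < 1 := pow_lt_one₀ hq0.le hq1 (by omega)
      have : 0 < 1 - q ^ (k + 1) := by linarith
      positivity
    · have h1 : q ^ (k + 1) ≤ q := by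
        rw [pow_succ]; exact mul_le_of_le_one_left hq0.le (pow_le_one₀ hq0.le hq1.le)
      have h2 : 0 < 1 - q := by linarith
      have h3 : z ^ (k + 1) ≤ z ^ k := by
        rw [pow_succ]; exact mul_le_of_le_one_right (by positivity) hz1.le
      rw [hterm, mul_one_div]
      exact div_le_div₀ (by positivity) h3 h2 (by linarith)
  have hF := (((s1.hasSum.sub s2.hasSum).mul_left 2).add s3').add
    (s4.hasSum.mul_left (Real.log q))
  have hFe := HasSum.tsum_eq ((aux_hasSum_congr (f := fun k : ℕ => auxc q β k *
      (-(2 * -Real.log q * ((k : ℝ) + 1))) ^ 0 *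
      exp (-(2 * -Real.log q * ((k : ℝ) + 1)) * x)) (fun k => by
    have he : exp (-(2 * -Real.log q * ((k : ℝ) + 1)) * x) = z ^ (k + 1) := by
      rw [← hterm, Real.rpow_def_of_pos hq0]
      congr 1; ring
    rw [he, hterm, auxc, mul_pow, mul_pow, pow_zero, ← pow_mul, mul_comm 2 (k + 1), pow_mul]
    have hu0 : 0 < q ^ (k + 1) := by positivity
    have hu1 : q ^ (k + 1) < 1 := pow_lt_one₀ hq0.le hq1 (by omega)
    generalize q ^ (k + 1) = u at *
    have h1 : 0 < 1 - u := by linarith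
    have h3 : 1 - u ^ 2 = (1 - u) * (1 + u) := by ring
    rw [h3]
    have hk : (0 : ℝ) < (k : ℝ) + 1 := by positivity
    field_simp
    ring)).mpr hF)
  rw [auxF, hFe, qDigamma]
  generalize (∑' k : ℕ, (z * q) ^ (k + 1) / (((k : ℝ) + 1) * (1 - (q ^ 2) ^ (k + 1)))) = A
  generalize (∑' k : ℕ, (z * q ^ 2) ^ (k + 1) / (((k : ℝ) + 1) * (1 - (q ^ 2) ^ (k + 1)))) = B
  generalize (∑' k : ℕ, (q ^ 2) ^ (k + 1) / (((k : ℝ) + 1) * (1 - (q ^ 2) ^ (k + 1)))) = D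
  generalize (∑' k : ℕ, q ^ (((k : ℝ) + 1) * (2 * x)) / (1 - q ^ (k + 1))) = G
  generalize β * (1 - q ^ 2) * z / (2 * (1 - z)) = H
  have h1p : 0 < 1 - q ^ 2 := by linarith
  have h1q : 0 < 1 - q := by linarith
  rw [mul_div_mul_comm, ← Real.rpow_sub h1p, ← Real.exp_sub]
  have hs : ((1 - q ^ 2) ^ (1 - (x + 1 / 2) - (1 - (x + 1)))) ^ 2 = 1 - q ^ 2 := by
    rw [show (1 - (x + 1 / 2) - (1 - (x + 1))) = 1 / 2 by ring, ← Real.sqrt_eq_rpow,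
      Real.sq_sqrt h1p.le]
  rw [mul_pow, hs, ← Real.exp_nat_mul]
  have hE : H + (-Real.log (1 - q) + Real.log q * G) =
      -Real.log (1 - q) + (H + Real.log q * G) := by ring
  rw [hE, Real.exp_add, Real.exp_neg, Real.exp_log h1q]
  have h3 : 2 * (A - B) + H + Real.log q * G =
      ((2 : ℕ) : ℝ) * (A - D - (B - D)) + (H + Real.log q * G) := by push_cast; ring
  rw [h3, Real.exp_add]
  have h4 : 1 - q ^ 2 = (1 - q) * (1 + q) := by ring
  rw [h4]
  field_simp
  rw [Real.exp_add, Real.exp_add, mul_assoc]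

theorem stmt7 (q β : ℝ) (hq0 : 0 < q) (hq1 : q < 1)
    (hβ : β ≥ -13 * Real.log q / (6 * (1 - q ^ 2))) :
    LogCompletelyMonotonicOn
      (fun x => 1 / (1 + q) * (qGamma (q ^ 2) (x + 1 / 2) / qGamma (q ^ 2) (x + 1)) ^ 2 *
        Real.exp (β * (1 - q ^ 2) * q ^ (2 * x) / (2 * (1 - q ^ (2 * x))) + qDigamma q (2 * x)))
      (Set.Ioi 0) := by
  have ha : 0 < 2 * -Real.log q := by linarith [Real.log_neg hq0 hq1]
  have hb := auxc_bound q β hq0 hq1 hβ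
  refine ⟨fun x hx => ?_, ?_, fun n _ x hx => ?_⟩
  · show 0 < _ * _
    rw [aux_main q β x hq0 hq1 hx]
    exact exp_pos _
  · have h : ContDiffOn ℝ (⊤ : ℕ∞) (auxF (2 * -Real.log q) (auxc q β) 0) (Ioi 0) :=
      contDiffOn_infty.mpr (fun N => auxF_contDiffOn _ _ ha _ hb N 0)
    refine h.congr (fun x hx => ?_)
    show Real.log (_ * _) = _
    rw [aux_main q β x hq0 hq1 hx, Real.log_exp]
  · rw [auxF_iteratedDeriv _ _ ha _ hb _ (fun x hx => ?_) n x hx]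
    · exact auxF_nonneg _ ha _ (auxc_nonneg q β hq0 hq1 hβ) n x
    · show Real.log (_ * _) = _
      rw [aux_main q β x hq0 hq1 hx, Real.log_exp]
end
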